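/- arXiv:1801.09073 — 2 statements merged into one kernel-verified Lean document; each statement's English description precedes it below -/
import Mathlib

section
/- For every nonnegative integer n and every real ξ, the Fourier transform of the over-scaled Hermite function of even index satisfies 𝓕[\widetilde{H}_{2n}](ξ) = ((-1)^{n} / (√2 · √(2^{2n}(2n)!))) · ξ^{2n} e^{-ξ²/4}. -/
/-!
The derivative identity `(e^{-x²} Hₙ)' = -e^{-x²} Hₙ₊₁` (a form of the Rodrigues formula) turns
raising the index by one into minus a derivative, hence, on the Fourier side, into multiplication
by `-iξ` (`integral_gaussHermite_succ`, an integration by parts). So the transform of `e^{-x²} Hₙ`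
is `(-iξ)ⁿ` times that of the Gaussian `e^{-x²}`, and `(-iξ)^{2n} = (-1)ⁿ ξ^{2n}`.
-/

open MeasureTheory Real Complex

noncomputable section

/-- Physicists' Hermite polynomials via the three-term recurrence. -/
def hermiteH : ℕ → ℝ → ℝ
  | 0, _ => 1
  | 1, x => 2 * x
  | (n + 2), x => 2 * x * hermiteH (n + 1) x - 2 * (n + 1) * hermiteH n x

/-- Over-scaled Hermite functions `H̃ₙ(x) = (2ⁿ n!)^{-1/2} e^{-x²} Hₙ(x)`. -/
def overHermite (n : ℕ) (x : ℝ) : ℝ :=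
  Real.exp (-x ^ 2) * hermiteH n x / Real.sqrt (2 ^ n * n.factorial)

/-- The confluent hypergeometric function `₁F₁(a, b; x)`. -/
def oneF1 (a b x : ℝ) : ℝ :=
  ∑' k : ℕ, ((ascPochhammer ℝ k).eval a / (ascPochhammer ℝ k).eval b) * x ^ k / k.factorial

/-- Fourier transform `𝓕[u](ξ) = (2π)^{-1/2} ∫ u(x) e^{-i x ξ} dx`. -/
def FT (u : ℝ → ℂ) (ξ : ℝ) : ℂ :=
  (Real.sqrt (2 * Real.pi))⁻¹ * ∫ x : ℝ, u x * Complex.exp (-Complex.I * x * ξ)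

/-- Inverse Fourier transform `𝓕⁻¹[v](x) = (2π)^{-1/2} ∫ v(ξ) e^{i x ξ} dξ`. -/
def IFT (v : ℝ → ℂ) (x : ℝ) : ℂ :=
  (Real.sqrt (2 * Real.pi))⁻¹ * ∫ ξ : ℝ, v ξ * Complex.exp (Complex.I * x * ξ)

/-- Fractional Laplacian `(-Δ)^{α/2} u = 𝓕⁻¹[|ξ|^α 𝓕[u](ξ)]`. -/
def fracLap (α : ℝ) (u : ℝ → ℂ) (x : ℝ) : ℂ :=
  IFT (fun ξ => (|ξ| ^ α : ℝ) * FT u ξ) x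

/-- The Appell property `H'ₙ₊₁ = 2 (n + 1) Hₙ`. -/
theorem hasDerivAt_hermiteH_succ (n : ℕ) (x : ℝ) :
    HasDerivAt (hermiteH (n + 1)) (2 * (n + 1) * hermiteH n x) x := by
  induction n using Nat.strong_induction_on with
  | _ n ih =>
    match n, ih with
    | 0, _ =>
      simpa [hermiteH] using (hasDerivAt_id x).const_mul 2
    | 1, _ =>
      have h : HasDerivAt (fun y : ℝ => 2 * y * (2 * y) - 2 * ((0 : ℕ) + 1) * 1) _ x :=
        (((hasDerivAt_id' x).const_mul 2).fun_mul ((hasDerivAt_id' x).const_mul 2)).sub_const _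
      refine HasDerivAt.congr_deriv (f := hermiteH 2) h ?_
      simp only [hermiteH]; push_cast; ring
    | n + 2, ih =>
      have h : HasDerivAt (fun y : ℝ => 2 * y * hermiteH (n + 2) y -
          2 * ((n + 1 : ℕ) + 1) * hermiteH (n + 1) y) _ x :=
        (((hasDerivAt_id' x).const_mul 2).fun_mul (ih (n + 1) (by omega))).fun_sub
          ((ih n (by omega)).const_mul _)
      refine HasDerivAt.congr_deriv (f := hermiteH (n + 3)) h ?_
      simp only [hermiteH]; push_cast; ring

/-- Together with the Appell property, the three-term recurrence gives
`(e^{-x²} Hₙ)' = -e^{-x²} Hₙ₊₁`. -/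
theorem hasDerivAt_gaussHermite (n : ℕ) (x : ℝ) :
    HasDerivAt (fun y => Real.exp (-y ^ 2) * hermiteH n y)
      (-(Real.exp (-x ^ 2) * hermiteH (n + 1) x)) x := by
  have hE : HasDerivAt (fun y : ℝ => Real.exp (-y ^ 2)) (Real.exp (-x ^ 2) * (-(2 * x))) x := by
    simpa using ((hasDerivAt_pow 2 x).neg).exp
  cases n with
  | zero =>
    convert hE using 1
    · ext y; simp [hermiteH]
    · simp [hermiteH]
  | succ n =>
    refine (hE.fun_mul (hasDerivAt_hermiteH_succ n x)).congr_deriv ?_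
    simp only [hermiteH]; ring

/-- The monomial factor `x ^ k` makes the statement stable under the three-term recurrence. -/
theorem integrable_pow_mul_gaussHermite (n k : ℕ) :
    Integrable (fun x : ℝ => x ^ k * (Real.exp (-x ^ 2) * hermiteH n x)) := by
  have h0 : ∀ k : ℕ, Integrable (fun x : ℝ => x ^ k * Real.exp (-x ^ 2)) := fun k => by
    have h := integrable_rpow_mul_exp_neg_mul_sq (b := 1) one_pos (s := k)
      (by linarith [Nat.cast_nonneg (α := ℝ) k])
    simpa using h
  induction n using Nat.strong_induction_on generalizing k with
  | _ n ih =>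
    match n, ih with
    | 0, _ => simpa [hermiteH] using h0 k
    | 1, _ =>
      refine ((h0 (k + 1)).const_mul 2).congr (.of_forall fun x => ?_)
      simp only [hermiteH]; ring
    | n + 2, ih =>
      refine (((ih (n + 1) (by omega) (k + 1)).const_mul 2).sub
        ((ih n (by omega) k).const_mul (2 * ((n : ℝ) + 1)))).congr (.of_forall fun x => ?_)
      simp only [hermiteH, Pi.sub_apply]; ring

theorem integrable_gaussHermite_mul_exp (n : ℕ) (ξ : ℝ) :
    Integrable (fun x : ℝ => ((Real.exp (-x ^ 2) * hermiteH n x : ℝ) : ℂ) *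
      Complex.exp (-Complex.I * x * ξ)) := by
  have h : Integrable (fun x : ℝ => ((Real.exp (-x ^ 2) * hermiteH n x : ℝ) : ℂ)) := by
    simpa using (integrable_pow_mul_gaussHermite n 0).ofReal (𝕜 := ℂ)
  refine h.mul_bdd (c := 1) (by fun_prop) (.of_forall fun x => ?_)
  rw [Complex.norm_exp]
  simp

/-- On the Fourier side, raising the index by one is multiplication by `-iξ`. -/
theorem integral_gaussHermite_succ (n : ℕ) (ξ : ℝ) :
    ∫ x : ℝ, ((Real.exp (-x ^ 2) * hermiteH (n + 1) x : ℝ) : ℂ) *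
        Complex.exp (-Complex.I * x * ξ) =
      (-Complex.I * ξ) * ∫ x : ℝ, ((Real.exp (-x ^ 2) * hermiteH n x : ℝ) : ℂ) *
        Complex.exp (-Complex.I * x * ξ) := by
  have i0 := integrable_gaussHermite_mul_exp n ξ
  have i1 := integrable_gaussHermite_mul_exp (n + 1) ξ
  have hd : ∀ x : ℝ, HasDerivAt (fun x : ℝ => ((Real.exp (-x ^ 2) * hermiteH n x : ℝ) : ℂ) *
      Complex.exp (-Complex.I * x * ξ))
      ((-Complex.I * ξ) * (((Real.exp (-x ^ 2) * hermiteH n x : ℝ) : ℂ) *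
        Complex.exp (-Complex.I * x * ξ)) -
        ((Real.exp (-x ^ 2) * hermiteH (n + 1) x : ℝ) : ℂ) *
        Complex.exp (-Complex.I * x * ξ)) x := fun x => by
    have hE : HasDerivAt (fun y : ℝ => Complex.exp (-Complex.I * y * ξ))
        (Complex.exp (-Complex.I * x * ξ) * (-Complex.I * 1 * ξ)) x :=
      (((Complex.ofRealCLM.hasDerivAt (x := x)).const_mul (-Complex.I)).mul_const (ξ : ℂ)).cexp
    refine ((hasDerivAt_gaussHermite n x).ofReal_comp.fun_mul hE).congr_deriv ?_
    push_cast; ring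
  have h := integral_eq_zero_of_hasDerivAt_of_integrable hd ((i0.const_mul _).sub i1) i0
  rw [integral_sub (i0.const_mul _) i1, integral_const_mul, sub_eq_zero] at h
  exact h.symm

theorem integral_gaussHermite (n : ℕ) (ξ : ℝ) :
    ∫ x : ℝ, ((Real.exp (-x ^ 2) * hermiteH n x : ℝ) : ℂ) * Complex.exp (-Complex.I * x * ξ) =
      (-Complex.I * ξ) ^ n * (Real.sqrt Real.pi * Complex.exp (-(ξ : ℂ) ^ 2 / 4)) := by
  induction n with
  | zero =>
    have h := fourierIntegral_gaussian (b := 1) (by simp) (-(ξ : ℂ))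
    have hs : ((Real.pi : ℂ) / 1) ^ (1 / 2 : ℂ) = (Real.sqrt Real.pi : ℂ) := by
      rw [Real.sqrt_eq_rpow, Complex.ofReal_cpow Real.pi_pos.le]
      simp
    rw [hs] at h
    rw [pow_zero, one_mul]
    convert h using 1
    · refine integral_congr_ae (.of_forall fun x => ?_)
      simp only [hermiteH]
      push_cast
      rw [mul_one, mul_comm]
      congr 2 <;> ring
    · congr 2; ring
  | succ n ih => rw [integral_gaussHermite_succ, ih]; ring

theorem FT_overHermite_even (n : ℕ) (ξ : ℝ) :
    FT (fun x => (overHermite (2 * n) x : ℂ)) ξ =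
      ((-1 : ℂ) ^ n / (↑(Real.sqrt 2) * ↑(Real.sqrt (2 ^ (2 * n) * (2 * n).factorial)))) *
        (ξ : ℂ) ^ (2 * n) * Complex.exp (-(ξ : ℂ) ^ 2 / 4) := by
  set c : ℝ := Real.sqrt (2 ^ (2 * n) * (2 * n).factorial) with hc
  have hint : ∫ x : ℝ, (overHermite (2 * n) x : ℂ) * Complex.exp (-Complex.I * x * ξ) =
      (c : ℂ)⁻¹ * ((-Complex.I * ξ) ^ (2 * n) *
        (Real.sqrt Real.pi * Complex.exp (-(ξ : ℂ) ^ 2 / 4))) := by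
    rw [← integral_gaussHermite, ← integral_const_mul]
    refine integral_congr_ae (.of_forall fun x => ?_)
    simp only [overHermite, ← hc]
    push_cast
    ring
  have hI : (-Complex.I * (ξ : ℂ)) ^ (2 * n) = (-1) ^ n * (ξ : ℂ) ^ (2 * n) := by
    rw [mul_pow, pow_mul (-Complex.I), neg_sq, Complex.I_sq]
  have hpi : (Real.sqrt Real.pi : ℂ) ≠ 0 :=
    Complex.ofReal_ne_zero.mpr (Real.sqrt_pos.mpr Real.pi_pos).ne'
  rw [FT, hint, hI, Real.sqrt_mul zero_le_two]
  push_cast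
  field_simp
end
end

section
/- For every real number α with 0 < α < 2, every nonnegative integer m, and every real x, the inverse Fourier transform satisfies (2π)^{-1/2} ∫_ℝ e^{-ξ²/2} ξ^{2m} |ξ|^{α} e^{i ξ x} dξ = (2^{(2m+α)/2} / √π) · Γ((2m+1+α)/2) · ₁F₁((2m+1+α)/2, 1/2; -x²/2). -/
/-!
Put `s = 2m + α` and `a = (s + 1) / 2`. The weight `|ξ|^s e^{-ξ²/2}` is even, so its inverse Fourier
transform reduces to the cosine integral `2 ∫₀^∞ t^s e^{-t²/2} cos (x t) dt`
(`integral_even_weight_mul_cexp`). In that integral the cosine is expanded in its power series and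
integrated term by term (`integral_cos_Ioi`); this is dominated convergence, because the series of
absolute values sums to `t^s e^{-t²/2} cosh (x t) ≤ e^{x²} t^s e^{-t²/4}`, which is integrable.

The `k`-th term is a Gaussian moment, hence a multiple of `Γ (a + k) = (a)_k Γ (a)`, and
`(2k)! = 4^k (1/2)_k k!` turns its coefficient into that of `₁F₁(a, 1/2; -x²/2)`
(`integral_term`).
-/


open MeasureTheory Real Complex

noncomputable section

lemma integrableOn_moment {s : ℝ} (hs : 0 < s) :
    IntegrableOn (fun t : ℝ => t ^ s * Real.exp (-t ^ 2 / 2)) (Set.Ioi 0) := by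
  convert! integrableOn_rpow_mul_exp_neg_mul_sq (b := 1 / 2) (by norm_num)
    (show (-1 : ℝ) < s by linarith) using 4
  ring

/-- Integrability on the half-line extends to the whole line by the reflection `t ↦ -t`. -/
lemma integrable_even_weight {s : ℝ} (hs : 0 < s) :
    Integrable (fun t : ℝ => |t| ^ s * Real.exp (-t ^ 2 / 2)) := by
  have h : IntegrableOn (fun t : ℝ => |t| ^ s * Real.exp (-t ^ 2 / 2)) (Set.Ioi 0) :=
    (integrableOn_moment hs).congr_fun
      (fun t ht => by simp only [abs_of_pos (Set.mem_Ioi.mp ht)]) measurableSet_Ioi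
  rw [← integrableOn_univ, ← Set.Iio_union_Ici (a := (0 : ℝ)), integrableOn_union,
    integrableOn_Ici_iff_integrableOn_Ioi]
  refine ⟨?_, h⟩
  rw [← (Measure.measurePreserving_neg (volume : Measure ℝ)).integrableOn_comp_preimage
      (Homeomorph.neg ℝ).measurableEmbedding]
  simpa [Function.comp_def] using h

lemma Gamma_add_natCast {a : ℝ} (ha : 0 < a) (k : ℕ) :
    Real.Gamma (a + k) = (ascPochhammer ℝ k).eval a * Real.Gamma a := by
  induction k with
  | zero => simp
  | succ k ih =>
    rw [Nat.cast_succ, ← add_assoc, Real.Gamma_add_one (by positivity), ih,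
      ascPochhammer_succ_eval]
    ring

/-- The duplication formula `(2k)! = 4^k (1/2)_k k!`. -/
lemma factorial_two_mul_eq (k : ℕ) :
    ((2 * k).factorial : ℝ) = 4 ^ k * (ascPochhammer ℝ k).eval (1 / 2) * k.factorial := by
  induction k with
  | zero => simp
  | succ k ih =>
    rw [show 2 * (k + 1) = 2 * k + 1 + 1 by ring, Nat.factorial_succ, Nat.factorial_succ,
      Nat.factorial_succ, ascPochhammer_succ_eval]
    push_cast
    rw [ih]
    ring

/-- The contribution of the `k`-th term of the cosine series: a Gaussian moment of order `s + 2k`. -/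
lemma integral_term {s : ℝ} (hs : 0 < s) (x : ℝ) (k : ℕ) :
    ∫ t in Set.Ioi (0 : ℝ), t ^ s * Real.exp (-t ^ 2 / 2) *
        ((-1) ^ k * (x * t) ^ (2 * k) / (2 * k).factorial) =
      2 ^ ((s - 1) / 2) * Real.Gamma ((s + 1) / 2) *
        ((ascPochhammer ℝ k).eval ((s + 1) / 2) / (ascPochhammer ℝ k).eval (1 / 2) *
          (-x ^ 2 / 2) ^ k / k.factorial) := by
  have hmom := _root_.integral_rpow_mul_exp_neg_mul_rpow (p := 2) (q := s + 2 * k) (b := 1 / 2)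
    (by norm_num) (by have : (0 : ℝ) ≤ k := k.cast_nonneg
                      linarith) (by norm_num)
  have hcongr : ∫ t in Set.Ioi (0 : ℝ), t ^ s * Real.exp (-t ^ 2 / 2) *
        ((-1) ^ k * (x * t) ^ (2 * k) / (2 * k).factorial) =
      ∫ t in Set.Ioi (0 : ℝ), ((-1) ^ k * x ^ (2 * k) / (2 * k).factorial) *
        (t ^ (s + 2 * k) * Real.exp (-(1 / 2) * t ^ (2 : ℝ))) := by
    refine setIntegral_congr_fun measurableSet_Ioi fun t ht => ?_
    have h1 : t ^ (s + 2 * k) = t ^ s * t ^ (2 * k) := by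
      rw [← Real.rpow_natCast, ← Real.rpow_add ht]
      push_cast
      rfl
    simp only [h1, Real.rpow_two, mul_pow]
    rw [show -(1 / 2) * t ^ 2 = -t ^ 2 / 2 by ring]
    ring
  have hG : Real.Gamma ((s + 2 * k + 1) / 2) =
      (ascPochhammer ℝ k).eval ((s + 1) / 2) * Real.Gamma ((s + 1) / 2) := by
    rw [← Gamma_add_natCast (by linarith)]
    congr 1
    ring
  have hpow : ((1 / 2 : ℝ)) ^ (-(s + 2 * k + 1) / 2) * (1 / 2) = 2 ^ ((s - 1) / 2) * 2 ^ k := by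
    rw [one_div, Real.inv_rpow (by norm_num), ← Real.rpow_neg (by norm_num),
      ← Real.rpow_neg_one (2 : ℝ), ← Real.rpow_natCast, ← Real.rpow_add (by norm_num),
      ← Real.rpow_add (by norm_num)]
    congr 1
    ring
  have hP : 0 < (ascPochhammer ℝ k).eval (1 / 2 : ℝ) := ascPochhammer_pos k _ (by norm_num)
  rw [hcongr, integral_const_mul, hmom, hpow, hG, factorial_two_mul_eq, div_pow, neg_pow (x ^ 2), pow_mul,
    show (4 : ℝ) ^ k = 2 ^ k * 2 ^ k by rw [← mul_pow]; norm_num]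
  field_simp

/-- The half-line cosine integral, by term-by-term integration of the cosine series. -/
lemma integral_cos_Ioi {s : ℝ} (hs : 0 < s) (x : ℝ) :
    ∫ t in Set.Ioi (0 : ℝ), t ^ s * Real.exp (-t ^ 2 / 2) * Real.cos (x * t) =
      2 ^ ((s - 1) / 2) * Real.Gamma ((s + 1) / 2) *
        oneF1 ((s + 1) / 2) (1 / 2) (-x ^ 2 / 2) := by
  have key : HasSum (fun k : ℕ => ∫ t in Set.Ioi (0 : ℝ), t ^ s * Real.exp (-t ^ 2 / 2) *
        ((-1) ^ k * (x * t) ^ (2 * k) / (2 * k).factorial))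
      (∫ t in Set.Ioi (0 : ℝ), t ^ s * Real.exp (-t ^ 2 / 2) * Real.cos (x * t)) := by
    refine hasSum_integral_of_dominated_convergence
      (fun k t => t ^ s * Real.exp (-t ^ 2 / 2) * ((x * t) ^ (2 * k) / (2 * k).factorial))
      (fun k => by fun_prop) (fun k => ?_) (.of_forall fun t => ?_) ?_ (.of_forall fun t => ?_)
    · filter_upwards [ae_restrict_mem measurableSet_Ioi] with t ht
      have : 0 ≤ (x * t) ^ (2 * k) := (even_two_mul k).pow_nonneg _
      have := Real.rpow_nonneg (le_of_lt ht) s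
      rw [mul_div_assoc, mul_left_comm, norm_mul, norm_pow, norm_neg, norm_one, one_pow, one_mul,
        Real.norm_of_nonneg (by positivity)]
    · exact (Real.hasSum_cosh (x * t)).summable.mul_left _
    · simp_rw [tsum_mul_left, ← Real.cosh_eq_tsum]
      have hdom : IntegrableOn (fun t : ℝ => Real.exp (x ^ 2) *
          (t ^ s * Real.exp (-(1 / 4) * t ^ 2))) (Set.Ioi 0) :=
        (integrableOn_rpow_mul_exp_neg_mul_sq (b := 1 / 4) (by norm_num)
          (show (-1 : ℝ) < s by linarith)).const_mul _
      refine hdom.mono' (by fun_prop) ?_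
      filter_upwards [ae_restrict_mem measurableSet_Ioi] with t ht
      have h0 := Real.rpow_nonneg (le_of_lt ht) s
      rw [Real.norm_of_nonneg (by positivity)]
      -- `± x t ≤ x² + t² / 4` leaves half of the Gaussian exponent for convergence.
      have h1 : Real.exp (-t ^ 2 / 2) * Real.cosh (x * t) ≤
          Real.exp (x ^ 2) * Real.exp (-(1 / 4) * t ^ 2) := by
        rw [Real.cosh_eq, ← Real.exp_add, mul_div_assoc', mul_add, ← Real.exp_add, ← Real.exp_add]
        have h2 : Real.exp (-t ^ 2 / 2 + x * t) ≤ Real.exp (x ^ 2 + -(1 / 4) * t ^ 2) :=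
          Real.exp_le_exp.mpr (by nlinarith [sq_nonneg (x - t / 2)])
        have h3 : Real.exp (-t ^ 2 / 2 + -(x * t)) ≤ Real.exp (x ^ 2 + -(1 / 4) * t ^ 2) :=
          Real.exp_le_exp.mpr (by nlinarith [sq_nonneg (x + t / 2)])
        linarith
      calc t ^ s * Real.exp (-t ^ 2 / 2) * Real.cosh (x * t)
          = t ^ s * (Real.exp (-t ^ 2 / 2) * Real.cosh (x * t)) := by ring
        _ ≤ t ^ s * (Real.exp (x ^ 2) * Real.exp (-(1 / 4) * t ^ 2)) := by gcongr
        _ = _ := by ring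
    · exact (Real.hasSum_cos (x * t)).mul_left _
  simp_rw [integral_term hs] at key
  rw [← key.tsum_eq, tsum_mul_left, oneF1]

/-- The substitution `t ↦ -t` shows that the Fourier integral of the even real weight equals its own
conjugate, so it is the integral of the real part of the integrand, an even function of `t`. -/
lemma integral_even_weight_mul_cexp {s : ℝ} (hs : 0 < s) (x : ℝ) :
    ∫ t : ℝ, ((|t| ^ s * Real.exp (-t ^ 2 / 2) : ℝ) : ℂ) * Complex.exp (Complex.I * x * t) =
      ((2 * ∫ t in Set.Ioi (0 : ℝ), t ^ s * Real.exp (-t ^ 2 / 2) * Real.cos (x * t) : ℝ) : ℂ) := by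
  set J := ∫ t : ℝ, ((|t| ^ s * Real.exp (-t ^ 2 / 2) : ℝ) : ℂ) * Complex.exp (Complex.I * x * t)
    with hJ
  have hint : Integrable fun t : ℝ =>
      ((|t| ^ s * Real.exp (-t ^ 2 / 2) : ℝ) : ℂ) * Complex.exp (Complex.I * x * t) := by
    refine (integrable_even_weight hs).mono' (by fun_prop) (.of_forall fun t => ?_)
    rw [norm_mul, show Complex.I * x * t = ((x * t : ℝ) : ℂ) * Complex.I by push_cast; ring,
      Complex.norm_exp_ofReal_mul_I, mul_one, Complex.norm_real, Real.norm_of_nonneg (by positivity)]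
  have hconj : (starRingEnd ℂ) J = J := by
    rw [hJ, ← integral_conj, ← integral_neg_eq_self]
    refine integral_congr_ae (.of_forall fun t => ?_)
    simp only [map_mul, Complex.conj_ofReal, ← Complex.exp_conj]
    simp
  rw [← Complex.conj_eq_iff_re.mp hconj]
  congr 1
  have hre := integral_re hint
  have habs := integral_comp_abs
    (f := fun t : ℝ => t ^ s * Real.exp (-t ^ 2 / 2) * Real.cos (x * t))
  rw [← habs]
  refine hre.symm.trans (integral_congr_ae (.of_forall fun t => ?_))
  have hcos : Real.cos (x * |t|) = Real.cos (x * t) := by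
    rcases abs_choice t with h | h <;> simp [h]
  simp only [sq_abs, hcos]
  rw [show Complex.I * x * t = ((x * t : ℝ) : ℂ) * Complex.I by push_cast; ring]
  simp only [RCLike.re_eq_complex_re, Complex.re_ofReal_mul, Complex.exp_ofReal_mul_I_re]

theorem IFT_even_moment (α : ℝ) (hα₀ : 0 < α) (hα₂ : α < 2) (m : ℕ) (x : ℝ) :
    IFT (fun ξ => ((Real.exp (-ξ ^ 2 / 2) * ξ ^ (2 * m) * |ξ| ^ α : ℝ) : ℂ)) x =
      ↑((2 : ℝ) ^ ((2 * (m : ℝ) + α) / 2) / Real.sqrt Real.pi *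
          Real.Gamma ((2 * (m : ℝ) + 1 + α) / 2) *
          oneF1 ((2 * (m : ℝ) + 1 + α) / 2) (1 / 2) (-x ^ 2 / 2)) := by
  have hs : 0 < 2 * (m : ℝ) + α := by positivity
  have hw : ∀ ξ : ℝ, Real.exp (-ξ ^ 2 / 2) * ξ ^ (2 * m) * |ξ| ^ α =
      |ξ| ^ (2 * (m : ℝ) + α) * Real.exp (-ξ ^ 2 / 2) := by
    intro ξ
    have h : ξ ^ (2 * m) = |ξ| ^ (2 * (m : ℝ)) := by
      rw [← (even_two_mul m).pow_abs, ← Real.rpow_natCast]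
      push_cast
      rfl
    rw [h, Real.rpow_add_of_nonneg (abs_nonneg ξ) (by positivity) hα₀.le]
    ring
  have hpow : (2 : ℝ) ^ ((2 * (m : ℝ) + α) / 2) =
      2 ^ ((2 * (m : ℝ) + α - 1) / 2) * Real.sqrt 2 := by
    rw [Real.sqrt_eq_rpow, ← Real.rpow_add (by norm_num)]
    congr 1
    ring
  simp only [IFT, hw]
  rw [integral_even_weight_mul_cexp hs, integral_cos_Ioi hs, ← Complex.ofReal_mul]
  congr 1
  rw [hpow, Real.sqrt_mul (by norm_num),
    show 2 * (m : ℝ) + α + 1 = 2 * (m : ℝ) + 1 + α by ring]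
  have h2 : Real.sqrt 2 * Real.sqrt 2 = 2 := Real.mul_self_sqrt (by norm_num)
  field_simp
  rw [Real.sq_sqrt (by norm_num)]
end
end
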